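/- arXiv:1209.3494 — 2 statements merged into one kernel-verified Lean document; each statement's English description precedes it below -/
import Mathlib

section
/- (Proposition 3) Let 0 < p < 1. Then the maximum achievable fidelity for the amplitude damping channel Λ_p satisfies 𝓕(Λ_p) := sup { F*(ρ(χ(α), Λ_p)) : 1/2 ≤ α² < 1 } = 1 − p/2, and the supremum is attained at the non-maximally entangled state |χ₀⟩ = (1/√(2−p))|00⟩ + √((1−p)/(2−p))|11⟩. -/
open Matrix Complex
open scoped Kronecker ComplexOrder

/-- Index type for two qubits: the product basis of ℂ² ⊗ ℂ². -/
abbrev Q2 := Fin 2 × Fin 2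

/-- Kraus operator `M₀` of the amplitude damping channel. -/
noncomputable def M0 (p : ℝ) : Matrix (Fin 2) (Fin 2) ℂ :=
  !![1, 0; 0, (Real.sqrt (1 - p) : ℂ)]

/-- Kraus operator `M₁` of the amplitude damping channel. -/
noncomputable def M1 (p : ℝ) : Matrix (Fin 2) (Fin 2) ℂ :=
  !![0, (Real.sqrt p : ℂ); 0, 0]

/-- Outer product `|ψ⟩⟨ψ|` of a two-qubit vector. -/
noncomputable def outer (ψ : Q2 → ℂ) : Matrix Q2 Q2 ℂ :=
  Matrix.of fun i j => ψ i * star (ψ j)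

/-- The state `ρ(χ, Λ_p)` obtained by applying the amplitude damping channel
with parameter `p` to the second qubit: `Σᵢ (I ⊗ Mᵢ) ρ (I ⊗ Mᵢ)†`. -/
noncomputable def ampDamp (p : ℝ) (ρ : Matrix Q2 Q2 ℂ) : Matrix Q2 Q2 ℂ :=
  ((1 : Matrix (Fin 2) (Fin 2) ℂ) ⊗ₖ M0 p) * ρ * ((1 : Matrix (Fin 2) (Fin 2) ℂ) ⊗ₖ M0 p)ᴴ +
  ((1 : Matrix (Fin 2) (Fin 2) ℂ) ⊗ₖ M1 p) * ρ * ((1 : Matrix (Fin 2) (Fin 2) ℂ) ⊗ₖ M1 p)ᴴ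

/-- The pure state `|χ⟩ = a|00⟩ + b|11⟩`. -/
noncomputable def ketChi (a b : ℝ) : Q2 → ℂ :=
  fun ij => if ij = ((0 : Fin 2), (0 : Fin 2)) then (a : ℂ)
    else if ij = ((1 : Fin 2), (1 : Fin 2)) then (b : ℂ) else 0

/-- The maximally entangled state `|Φ⁺⟩ = (|00⟩ + |11⟩)/√2`. -/
noncomputable def phiPlus : Q2 → ℂ := ketChi (Real.sqrt 2)⁻¹ (Real.sqrt 2)⁻¹

/-- The optimal transmitted state `|χ₀⟩ = (1/√(2−p))|00⟩ + √((1−p)/(2−p))|11⟩`. -/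
noncomputable def ketChi0 (p : ℝ) : Q2 → ℂ :=
  ketChi (Real.sqrt (1 / (2 - p))) (Real.sqrt ((1 - p) / (2 - p)))

/-- Reduced density matrix on the first qubit (trace out the second qubit). -/
noncomputable def trSecond (ρ : Matrix Q2 Q2 ℂ) : Matrix (Fin 2) (Fin 2) ℂ :=
  Matrix.of fun i k => ∑ j : Fin 2, ρ (i, j) (k, j)

/-- Reduced density matrix on the second qubit (trace out the first qubit). -/
noncomputable def trFirst (ρ : Matrix Q2 Q2 ℂ) : Matrix (Fin 2) (Fin 2) ℂ :=
  Matrix.of fun j l => ∑ i : Fin 2, ρ (i, j) (i, l)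

/-- A unit vector `ψ ∈ ℂ²⊗ℂ²` is maximally entangled if both reduced density
matrices of `|ψ⟩⟨ψ|` equal `I/2`. -/
def MaxEnt (ψ : Q2 → ℂ) : Prop :=
  (∑ ij : Q2, Complex.normSq (ψ ij)) = 1 ∧
  trSecond (outer ψ) = (1 / 2 : ℂ) • (1 : Matrix (Fin 2) (Fin 2) ℂ) ∧
  trFirst (outer ψ) = (1 / 2 : ℂ) • (1 : Matrix (Fin 2) (Fin 2) ℂ)

/-- The real expectation value `⟨ψ|ρ|ψ⟩`. -/
noncomputable def expectation (ψ : Q2 → ℂ) (ρ : Matrix Q2 Q2 ℂ) : ℝ :=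
  (∑ i : Q2, ∑ j : Q2, star (ψ i) * ρ i j * ψ j).re

/-- Fidelity (fully entangled fraction): `F(ρ) = sup_Ψ ⟨Ψ|ρ|Ψ⟩` over maximally
entangled unit vectors `Ψ`. -/
noncomputable def Fid (ρ : Matrix Q2 Q2 ℂ) : ℝ :=
  sSup {x : ℝ | ∃ ψ : Q2 → ℂ, MaxEnt ψ ∧ x = expectation ψ ρ}

/-- Partial transposition on the second qubit: `(ρ^Γ)_{(i,j),(k,l)} = ρ_{(i,l),(k,j)}`. -/
def ptrans (ρ : Matrix Q2 Q2 ℂ) : Matrix Q2 Q2 ℂ :=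
  Matrix.of fun ij kl => ρ (ij.1, kl.2) (kl.1, ij.2)

/-- The Verstraete–Verschelde maximum achievable fidelity under trace-preserving LOCC,
as the value of the semidefinite program
`F*(ρ) = sup { 1/2 − Tr(X ρ^Γ) : X Hermitian, 0 ≤ X ≤ I, −I/2 ≤ X^Γ ≤ I/2 }`. -/
noncomputable def FStar (ρ : Matrix Q2 Q2 ℂ) : ℝ :=
  sSup {x : ℝ | ∃ X : Matrix Q2 Q2 ℂ,
    X.IsHermitian ∧ X.PosSemidef ∧ ((1 : Matrix Q2 Q2 ℂ) - X).PosSemidef ∧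
    (ptrans X + (1 / 2 : ℂ) • (1 : Matrix Q2 Q2 ℂ)).PosSemidef ∧
    ((1 / 2 : ℂ) • (1 : Matrix Q2 Q2 ℂ) - ptrans X).PosSemidef ∧
    x = 1 / 2 - ((X * ptrans ρ).trace).re}

/-- The Pauli matrix `σ_y`. -/
noncomputable def sigY : Matrix (Fin 2) (Fin 2) ℂ := !![0, -Complex.I; Complex.I, 0]

/-- The matrix `ρ (σ_y⊗σ_y) ρ̄ (σ_y⊗σ_y)` whose eigenvalues define the concurrence. -/
noncomputable def Rmat (ρ : Matrix Q2 Q2 ℂ) : Matrix Q2 Q2 ℂ :=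
  ρ * (sigY ⊗ₖ sigY) * ρ.map (starRingEnd ℂ) * (sigY ⊗ₖ sigY)

/-- `c` is the concurrence of `ρ`: `c = max(0, λ₁ − λ₂ − λ₃ − λ₄)` where
`λ₁ ≥ λ₂ ≥ λ₃ ≥ λ₄ ≥ 0` are the square roots of the eigenvalues (with multiplicity)
of `ρ (σ_y⊗σ_y) ρ̄ (σ_y⊗σ_y)`. -/
def IsConcurrence (ρ : Matrix Q2 Q2 ℂ) (c : ℝ) : Prop :=
  ∃ lam : Fin 4 → ℝ,
    (∀ i j : Fin 4, i ≤ j → lam j ≤ lam i) ∧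
    (∀ i : Fin 4, 0 ≤ lam i) ∧
    (Rmat ρ).charpoly = ∏ i : Fin 4, (Polynomial.X - Polynomial.C ((lam i : ℂ) ^ 2)) ∧
    c = max 0 (lam 0 - lam 1 - lam 2 - lam 3)

/-- `μ` is an eigenvalue of the matrix `A`. -/
def IsEigenvalue (A : Matrix Q2 Q2 ℂ) (μ : ℂ) : Prop :=
  ∃ v : Q2 → ℂ, v ≠ 0 ∧ A *ᵥ v = μ • v

/-!
The output state is `|χ'⟩⟨χ'| + b² p |10⟩⟨10|` with `|χ'⟩ = a|00⟩ + b √(1 - p) |11⟩`. Hence the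
objective at `X` involves, besides nonnegative diagonal terms, only `x = X₁₀,₁₀` and `t = -Re
X₀₁,₁₀`. Positivity of `X` together with `-I/2 ≤ X^Γ ≤ I/2` forces `2 t² ≤ x` and `|t| ≤ 1/2`, and
the square `(a √(1 - p) - 2 b t)² ≥ 0` bounds the objective by `1 - p / 2` for all `a` and `b` with
`a² + b² ≤ 1`. For the projection onto the singlet `X^Γ = I/2 - |Φ⁺⟩⟨Φ⁺|`, so it is feasible, and
at `χ₀` it turns the bound into an equality.
-/

section PosSemidef

variable {n 𝕜 : Type*} [RCLike 𝕜]

theorem norm_apply_sq_le_of_posSemidef {M : Matrix n n 𝕜} (hM : M.PosSemidef) (i j : n) :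
    ‖M i j‖ ^ 2 ≤ RCLike.re (M i i) * RCLike.re (M j j) := by
  have hdet : 0 ≤ M i i * M j j - M i j * M j i := by
    have hminor := (hM.submatrix ![i, j]).det_nonneg
    rwa [det_fin_two] at hminor
  have hji : M i j * M j i = (‖M i j‖ ^ 2 : 𝕜) := by
    rw [← hM.isHermitian.apply j i, RCLike.star_def, RCLike.mul_conj]
  have hi : (RCLike.re (M i i) : 𝕜) = M i i := hM.isHermitian.coe_re_apply_self i
  have hj : (RCLike.re (M j j) : 𝕜) = M j j := hM.isHermitian.coe_re_apply_self j
  rw [hji, ← hi, ← hj] at hdet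
  exact sub_nonneg.mp (by exact_mod_cast hdet)

theorem norm_apply_le_of_posSemidef_add_of_posSemidef_sub [DecidableEq n] {M : Matrix n n 𝕜}
    {c : 𝕜} (hadd : (M + c • (1 : Matrix n n 𝕜)).PosSemidef)
    (hsub : (c • (1 : Matrix n n 𝕜) - M).PosSemidef) (i j : n) : ‖M i j‖ ≤ ‖c‖ := by
  have hdiag (k : n) : |RCLike.re (M k k)| ≤ RCLike.re c ∧ RCLike.im (M k k) = 0 := by
    have hadd_k := RCLike.nonneg_iff.mp (hadd.diag_nonneg (i := k))
    have hsub_k := RCLike.nonneg_iff.mp (hsub.diag_nonneg (i := k))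
    simp only [Matrix.add_apply, Matrix.sub_apply, Matrix.smul_apply, one_apply_eq, smul_eq_mul,
      mul_one, map_add, map_sub] at hadd_k hsub_k
    exact ⟨abs_le.mpr ⟨by linarith, by linarith⟩, by linarith⟩
  refine le_trans ?_ (RCLike.re_le_norm c)
  rcases eq_or_ne i j with rfl | hij
  · have hself : (RCLike.re (M i i) : 𝕜) = M i i := RCLike.ext (by simp) (by simp [hdiag i])
    rw [← hself, RCLike.norm_ofReal]
    exact (hdiag i).1
  · have hadd_ij : ‖M i j‖ ^ 2 ≤
        (RCLike.re (M i i) + RCLike.re c) * (RCLike.re (M j j) + RCLike.re c) := by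
      simpa [hij] using norm_apply_sq_le_of_posSemidef hadd i j
    have hsub_ij : ‖M i j‖ ^ 2 ≤
        (RCLike.re c - RCLike.re (M i i)) * (RCLike.re c - RCLike.re (M j j)) := by
      simpa [hij] using norm_apply_sq_le_of_posSemidef hsub i j
    have hc : 0 ≤ RCLike.re c := (abs_nonneg _).trans (hdiag i).1
    have hi : RCLike.re (M i i) ^ 2 ≤ RCLike.re c ^ 2 :=
      sq_le_sq.mpr ((hdiag i).1.trans (le_abs_self _))
    -- The product of the two minors is at most `(c² - Mᵢᵢ²) (c² - Mⱼⱼ²) ≤ c⁴`.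
    have hfour : ‖M i j‖ ^ 4 ≤ RCLike.re c ^ 4 := by
      have hprod := mul_le_mul hadd_ij hsub_ij (by positivity) ((sq_nonneg _).trans hadd_ij)
      nlinarith [mul_nonneg (sub_nonneg.mpr hi) (sq_nonneg (RCLike.re (M j j))),
        mul_nonneg (sq_nonneg (RCLike.re c)) (sq_nonneg (RCLike.re (M i i)))]
    exact le_of_pow_le_pow_left₀ four_ne_zero hc hfour

theorem isStarProjection_vecMulVec_star {R : Type*} [CommSemiring R] [StarRing R] [Fintype n]
    {v : n → R} (hv : star v ⬝ᵥ v = 1) : IsStarProjection (vecMulVec v (star v)) where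
  isIdempotentElem := by
    rw [IsIdempotentElem, vecMulVec_mul_vecMulVec, hv, one_smul]
  isSelfAdjoint := by
    rw [IsSelfAdjoint, star_eq_conjTranspose, conjTranspose_vecMulVec, star_star]

end PosSemidef

theorem two_mul_sub_two_mul_sq_le_sq_div_two {a b : ℝ} (hab : a ^ 2 + b ^ 2 ≤ 1) (s : ℝ) {t : ℝ}
    (ht : |t| ≤ 1 / 2) :
    2 * a * b * s * t - 2 * b ^ 2 * (1 - s ^ 2) * t ^ 2 ≤ s ^ 2 / 2 := by
  have ht_sq : (2 * t) ^ 2 ≤ 1 := by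
    rw [sq_le_one_iff_abs_le_one, abs_mul, abs_two]
    linarith
  have hcoeff : a ^ 2 + b ^ 2 * (2 * t) ^ 2 ≤ 1 := by
    nlinarith [mul_le_mul_of_nonneg_left ht_sq (sq_nonneg b)]
  nlinarith [sq_nonneg (a * s - 2 * b * t), mul_le_mul_of_nonneg_left hcoeff (sq_nonneg s)]

theorem outer_eq_vecMulVec (ψ : Q2 → ℂ) : outer ψ = vecMulVec ψ (star ψ) := rfl

theorem mul_outer_mul_conjTranspose (A : Matrix Q2 Q2 ℂ) (ψ : Q2 → ℂ) :
    A * outer ψ * Aᴴ = outer (A *ᵥ ψ) := by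
  rw [outer_eq_vecMulVec, outer_eq_vecMulVec, mul_vecMulVec, vecMulVec_mul, star_mulVec]

theorem trace_mul_outer (A : Matrix Q2 Q2 ℂ) (ψ : Q2 → ℂ) :
    (A * outer ψ).trace = star ψ ⬝ᵥ A *ᵥ ψ := by
  rw [outer_eq_vecMulVec, mul_vecMulVec, trace_vecMulVec, dotProduct_comm]

theorem posSemidef_outer (ψ : Q2 → ℂ) : (outer ψ).PosSemidef :=
  posSemidef_vecMulVec_self_star ψ

open scoped MatrixOrder in
theorem posSemidef_one_sub_outer {ψ : Q2 → ℂ} (hψ : star ψ ⬝ᵥ ψ = 1) :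
    (1 - outer ψ).PosSemidef :=
  (isStarProjection_vecMulVec_star hψ).le_one

theorem trace_mul_ptrans (A B : Matrix Q2 Q2 ℂ) :
    (A * ptrans B).trace = (ptrans A * B).trace := by
  simp only [trace, diag_apply, mul_apply, ptrans, of_apply, Fintype.sum_prod_type,
    Fin.sum_univ_two]
  ring

theorem ketChi_dotProduct_mulVec (A : Matrix Q2 Q2 ℂ) (a b : ℝ) :
    star (ketChi a b) ⬝ᵥ A *ᵥ ketChi a b =
      (a ^ 2 : ℝ) * A (0, 0) (0, 0) + (b ^ 2 : ℝ) * A (1, 1) (1, 1)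
        + (a * b : ℝ) * (A (0, 0) (1, 1) + A (1, 1) (0, 0)) := by
  simp only [dotProduct, Pi.star_apply, ketChi, RCLike.star_def, mulVec, mul_ite, mul_zero,
    Fintype.sum_prod_type, Prod.mk.injEq, Fin.sum_univ_two, and_true, zero_ne_one, and_false,
    ↓reduceIte, one_ne_zero, add_zero, zero_add, conj_ofReal, map_zero, zero_mul, ofReal_pow,
    ofReal_mul]
  ring

theorem single_dotProduct_mulVec_single {n : Type*} [Fintype n] [DecidableEq n] (A : Matrix n n ℂ)
    (i : n) (c : ℝ) :
    star (Pi.single i (c : ℂ)) ⬝ᵥ A *ᵥ Pi.single i (c : ℂ) = (c ^ 2 : ℝ) * A i i := by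
  rw [← Pi.single_star]
  simp only [RCLike.star_def, conj_ofReal, mulVec_single, op_smul_eq_smul, coe_smul,
    dotProduct_smul, single_dotProduct, col_apply, real_smul, ofReal_pow]
  ring

theorem one_kronecker_M0_mulVec_ketChi (p a b : ℝ) :
    ((1 : Matrix (Fin 2) (Fin 2) ℂ) ⊗ₖ M0 p) *ᵥ ketChi a b = ketChi a (b * √(1 - p)) := by
  ext ⟨i, j⟩
  fin_cases i <;> fin_cases j <;>
    simp [M0, ketChi, mulVec, dotProduct, Fintype.sum_prod_type, mul_comm]

theorem one_kronecker_M1_mulVec_ketChi (p a b : ℝ) :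
    ((1 : Matrix (Fin 2) (Fin 2) ℂ) ⊗ₖ M1 p) *ᵥ ketChi a b =
      Pi.single (1, 0) ((b * √p : ℝ) : ℂ) := by
  ext ⟨i, j⟩
  fin_cases i <;> fin_cases j <;>
    simp [M1, ketChi, mulVec, dotProduct, Fintype.sum_prod_type, mul_comm]

theorem ampDamp_outer_ketChi (p a b : ℝ) :
    ampDamp p (outer (ketChi a b)) =
      outer (ketChi a (b * √(1 - p))) + outer (Pi.single (1, 0) ((b * √p : ℝ) : ℂ)) := by
  rw [ampDamp, mul_outer_mul_conjTranspose, mul_outer_mul_conjTranspose,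
    one_kronecker_M0_mulVec_ketChi, one_kronecker_M1_mulVec_ketChi]

theorem re_trace_mul_ptrans_ampDamp {X : Matrix Q2 Q2 ℂ} (hX : X.IsHermitian) {p : ℝ}
    (hp0 : 0 ≤ p) (hp1 : p ≤ 1) (a b : ℝ) :
    (X * ptrans (ampDamp p (outer (ketChi a b)))).trace.re =
      a ^ 2 * (X (0, 0) (0, 0)).re + b ^ 2 * (1 - p) * (X (1, 1) (1, 1)).re
        + b ^ 2 * p * (X (1, 0) (1, 0)).re + 2 * a * b * √(1 - p) * (X (0, 1) (1, 0)).re := by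
  have hherm : (X (1, 0) (0, 1)).re = (X (0, 1) (1, 0)).re := by
    rw [← hX.apply (1, 0) (0, 1), star_def, conj_re]
  have hsqrt : (b * √(1 - p)) ^ 2 = b ^ 2 * (1 - p) := by
    rw [mul_pow, Real.sq_sqrt (sub_nonneg.mpr hp1)]
  have hsqrt' : (b * √p) ^ 2 = b ^ 2 * p := by rw [mul_pow, Real.sq_sqrt hp0]
  rw [trace_mul_ptrans, ampDamp_outer_ketChi, mul_add, trace_add, trace_mul_outer, trace_mul_outer,
    ketChi_dotProduct_mulVec, single_dotProduct_mulVec_single, hsqrt, hsqrt']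
  simp only [ptrans, of_apply, add_re, re_ofReal_mul, hherm]
  ring

/-- Feasibility of `X` for the semidefinite program whose value is `FStar`; the feasible set does
not depend on the state. -/
structure IsFeasible (X : Matrix Q2 Q2 ℂ) : Prop where
  isHermitian : X.IsHermitian
  posSemidef : X.PosSemidef
  posSemidef_one_sub : (1 - X).PosSemidef
  posSemidef_ptrans_add : (ptrans X + (1 / 2 : ℂ) • (1 : Matrix Q2 Q2 ℂ)).PosSemidef
  posSemidef_sub_ptrans : ((1 / 2 : ℂ) • (1 : Matrix Q2 Q2 ℂ) - ptrans X).PosSemidef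

/-- The objective function of the semidefinite program whose value is `FStar ρ`. -/
noncomputable def objective (ρ X : Matrix Q2 Q2 ℂ) : ℝ :=
  1 / 2 - (X * ptrans ρ).trace.re

theorem FStar_eq_sSup_image (ρ : Matrix Q2 Q2 ℂ) :
    FStar ρ = sSup (objective ρ '' {X | IsFeasible X}) := by
  refine congrArg sSup (Set.ext fun x => ⟨?_, ?_⟩)
  · rintro ⟨X, hherm, hX, hX_sub, hΓ_add, hΓ_sub, rfl⟩
    exact ⟨X, ⟨hherm, hX, hX_sub, hΓ_add, hΓ_sub⟩, rfl⟩
  · rintro ⟨X, hX, rfl⟩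
    exact ⟨X, hX.isHermitian, hX.posSemidef, hX.posSemidef_one_sub, hX.posSemidef_ptrans_add,
      hX.posSemidef_sub_ptrans, rfl⟩

theorem IsFeasible.norm_apply_ptrans_le {X : Matrix Q2 Q2 ℂ} (hX : IsFeasible X) (i j : Q2) :
    ‖ptrans X i j‖ ≤ 1 / 2 := by
  simpa using norm_apply_le_of_posSemidef_add_of_posSemidef_sub hX.posSemidef_ptrans_add
    hX.posSemidef_sub_ptrans i j

theorem IsFeasible.two_mul_re_sq_le {X : Matrix Q2 Q2 ℂ} (hX : IsFeasible X) :
    2 * (X (0, 1) (1, 0)).re ^ 2 ≤ (X (1, 0) (1, 0)).re := by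
  have hminor := norm_apply_sq_le_of_posSemidef hX.posSemidef (0, 1) (1, 0)
  have hre : (X (0, 1) (1, 0)).re ^ 2 ≤ ‖X (0, 1) (1, 0)‖ ^ 2 :=
    sq_le_sq.mpr (by simpa using abs_re_le_norm (X (0, 1) (1, 0)))
  have hhalf : (X (0, 1) (0, 1)).re ≤ 1 / 2 :=
    (re_le_norm _).trans (hX.norm_apply_ptrans_le (0, 1) (0, 1))
  have hnonneg : 0 ≤ (X (1, 0) (1, 0)).re := (nonneg_iff.mp hX.posSemidef.diag_nonneg).1
  simp only [RCLike.re_to_complex] at hminor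
  nlinarith

theorem IsFeasible.objective_le {X : Matrix Q2 Q2 ℂ} (hX : IsFeasible X) {p : ℝ} (hp0 : 0 ≤ p)
    (hp1 : p ≤ 1) {a b : ℝ} (hab : a ^ 2 + b ^ 2 ≤ 1) :
    objective (ampDamp p (outer (ketChi a b))) X ≤ 1 - p / 2 := by
  rw [objective, re_trace_mul_ptrans_ampDamp hX.isHermitian hp0 hp1]
  have hdiag (i : Q2) : 0 ≤ (X i i).re := (nonneg_iff.mp hX.posSemidef.diag_nonneg).1
  have h00 : 0 ≤ a ^ 2 * (X (0, 0) (0, 0)).re := mul_nonneg (sq_nonneg a) (hdiag _)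
  have h11 : 0 ≤ b ^ 2 * (1 - p) * (X (1, 1) (1, 1)).re :=
    mul_nonneg (mul_nonneg (sq_nonneg b) (sub_nonneg.mpr hp1)) (hdiag _)
  have h10 : b ^ 2 * p * (2 * (X (0, 1) (1, 0)).re ^ 2) ≤ b ^ 2 * p * (X (1, 0) (1, 0)).re :=
    mul_le_mul_of_nonneg_left hX.two_mul_re_sq_le (by positivity)
  have hre : |-(X (0, 1) (1, 0)).re| ≤ 1 / 2 := by
    rw [abs_neg]
    exact (abs_re_le_norm _).trans (hX.norm_apply_ptrans_le (0, 0) (1, 1))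
  have hsquare := two_mul_sub_two_mul_sq_le_sq_div_two hab √(1 - p) hre
  rw [Real.sq_sqrt (sub_nonneg.mpr hp1)] at hsquare
  linarith

theorem FStar_ampDamp_outer_ketChi_le {p : ℝ} (hp0 : 0 ≤ p) (hp1 : p ≤ 1) {a b : ℝ}
    (hab : a ^ 2 + b ^ 2 ≤ 1) : FStar (ampDamp p (outer (ketChi a b))) ≤ 1 - p / 2 := by
  rw [FStar_eq_sSup_image]
  refine Real.sSup_le ?_ (by linarith)
  rintro _ ⟨X, hX, rfl⟩
  exact hX.objective_le hp0 hp1 hab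

/-- The two-qubit singlet state `|Ψ⁻⟩ = (|01⟩ - |10⟩)/√2`. -/
noncomputable def singlet : Q2 → ℂ :=
  Pi.single (0, 1) (((√2)⁻¹ : ℝ) : ℂ) - Pi.single (1, 0) (((√2)⁻¹ : ℝ) : ℂ)

theorem inv_sqrt_two_mul_self : ((√2 : ℂ)⁻¹) * (√2 : ℂ)⁻¹ = 1 / 2 := by
  rw [← mul_inv, ← ofReal_mul, Real.mul_self_sqrt zero_le_two]
  norm_num

theorem star_singlet_dotProduct_self : star singlet ⬝ᵥ singlet = 1 := by
  norm_num [singlet, dotProduct, Fintype.sum_prod_type, inv_sqrt_two_mul_self]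

theorem star_phiPlus_dotProduct_self : star phiPlus ⬝ᵥ phiPlus = 1 := by
  norm_num [phiPlus, ketChi, dotProduct, Fintype.sum_prod_type, inv_sqrt_two_mul_self]

theorem ptrans_outer_singlet :
    ptrans (outer singlet) = (1 / 2 : ℂ) • (1 : Matrix Q2 Q2 ℂ) - outer phiPlus := by
  ext ⟨i, j⟩ ⟨k, l⟩
  fin_cases i <;> fin_cases j <;> fin_cases k <;> fin_cases l <;>
    simp [ptrans, outer, singlet, phiPlus, ketChi, one_apply, inv_sqrt_two_mul_self]

theorem isFeasible_outer_singlet : IsFeasible (outer singlet) where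
  isHermitian := (posSemidef_outer singlet).isHermitian
  posSemidef := posSemidef_outer singlet
  posSemidef_one_sub := posSemidef_one_sub_outer star_singlet_dotProduct_self
  posSemidef_ptrans_add := by
    have hsum : ptrans (outer singlet) + (1 / 2 : ℂ) • (1 : Matrix Q2 Q2 ℂ) =
        1 - outer phiPlus := by
      rw [ptrans_outer_singlet]
      module
    rw [hsum]
    exact posSemidef_one_sub_outer star_phiPlus_dotProduct_self
  posSemidef_sub_ptrans := by
    rw [ptrans_outer_singlet, sub_sub_cancel]
    exact posSemidef_outer phiPlus

theorem objective_outer_singlet {p : ℝ} (hp0 : 0 ≤ p) (hp1 : p ≤ 1) (a b : ℝ) :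
    objective (ampDamp p (outer (ketChi a b))) (outer singlet) =
      1 / 2 - b ^ 2 * p / 2 + a * b * √(1 - p) := by
  have h00 : (outer singlet (0, 0) (0, 0)).re = 0 := by simp [outer, singlet]
  have h11 : (outer singlet (1, 1) (1, 1)).re = 0 := by simp [outer, singlet]
  have h10 : (outer singlet (1, 0) (1, 0)).re = 1 / 2 := by
    simp [outer, singlet, inv_sqrt_two_mul_self]
  have h01 : (outer singlet (0, 1) (1, 0)).re = -(1 / 2) := by
    simp [outer, singlet, inv_sqrt_two_mul_self]
  rw [objective, re_trace_mul_ptrans_ampDamp isFeasible_outer_singlet.isHermitian hp0 hp1,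
    h00, h11, h10, h01]
  ring

theorem ketChi0_eq_ketChi_sqrt {p : ℝ} (hp : p < 2) :
    ketChi0 p = ketChi √(1 / (2 - p)) √(1 - √(1 / (2 - p)) ^ 2) := by
  have hpos : 0 < 2 - p := sub_pos.mpr hp
  rw [ketChi0, Real.sq_sqrt (by positivity), one_sub_div hpos.ne']
  ring_nf

theorem FStar_ampDamp_outer_ketChi0 {p : ℝ} (hp0 : 0 ≤ p) (hp1 : p ≤ 1) :
    FStar (ampDamp p (outer (ketChi0 p))) = 1 - p / 2 := by
  have hpos : 0 < 2 - p := by linarith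
  have ha : √(1 / (2 - p)) ^ 2 = 1 / (2 - p) := Real.sq_sqrt (by positivity)
  have hb : √((1 - p) / (2 - p)) = √(1 / (2 - p)) * √(1 - p) := by
    rw [← Real.sqrt_mul (by positivity), one_div_mul_eq_div]
  have hs : √(1 - p) ^ 2 = 1 - p := Real.sq_sqrt (sub_nonneg.mpr hp1)
  have hnorm : √(1 / (2 - p)) ^ 2 + √((1 - p) / (2 - p)) ^ 2 ≤ 1 := by
    rw [hb, mul_pow, ha, hs]
    apply le_of_eq
    field_simp
    ring
  have hvalue : objective (ampDamp p (outer (ketChi0 p))) (outer singlet) = 1 - p / 2 := by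
    rw [ketChi0, objective_outer_singlet hp0 hp1, hb]
    have hab : √(1 / (2 - p)) * (√(1 / (2 - p)) * √(1 - p)) * √(1 - p) =
        √(1 / (2 - p)) ^ 2 * √(1 - p) ^ 2 := by ring
    rw [mul_pow, hab, ha, hs]
    field_simp
    ring
  rw [FStar_eq_sSup_image]
  refine IsGreatest.csSup_eq ⟨⟨outer singlet, isFeasible_outer_singlet, hvalue⟩, ?_⟩
  rintro _ ⟨X, hX, rfl⟩
  exact hX.objective_le hp0 hp1 hnorm

/-- Proposition 3: For `0 < p < 1`, the maximum achievable fidelity for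
the amplitude damping channel, `𝓕(Λ_p) = sup { F*(ρ(χ(α), Λ_p)) : 1/2 ≤ α² < 1 }`,
equals `1 − p/2` and is attained at the non-maximally entangled state `|χ₀⟩`. -/
theorem channel_optimal_fidelity (p : ℝ) (hp0 : 0 < p) (hp1 : p < 1) :
    sSup {x : ℝ | ∃ α : ℝ, 1 / 2 ≤ α ^ 2 ∧ α ^ 2 < 1 ∧
        x = FStar (ampDamp p (outer (ketChi α (Real.sqrt (1 - α ^ 2)))))} = 1 - p / 2 ∧
    FStar (ampDamp p (outer (ketChi0 p))) = 1 - p / 2 := by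
  have hpos : 0 < 2 - p := by linarith
  have hχ₀ := FStar_ampDamp_outer_ketChi0 hp0.le hp1.le
  have ha : √(1 / (2 - p)) ^ 2 = 1 / (2 - p) := Real.sq_sqrt (by positivity)
  refine ⟨IsGreatest.csSup_eq ⟨⟨√(1 / (2 - p)), ?_, ?_, ?_⟩, ?_⟩, hχ₀⟩
  · rw [ha]
    gcongr
    linarith
  · rw [ha, div_lt_one hpos]
    linarith
  · rw [← ketChi0_eq_ketChi_sqrt (by linarith), hχ₀]
  · rintro _ ⟨α, -, hα, rfl⟩
    refine FStar_ampDamp_outer_ketChi_le hp0.le hp1.le ?_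
    rw [Real.sq_sqrt (sub_nonneg.mpr hα.le), add_sub_cancel]
end

section
/- For p ∈ (0,1), the concurrence of the optimal transmitted state |χ₀⟩ = (1/√(2−p))|00⟩ + √((1−p)/(2−p))|11⟩ equals C(χ₀) = 2√(1−p)/(2−p); moreover, the function p ↦ 2√(1−p)/(2−p) is strictly decreasing on (0,1) and tends to 0 as p → 1⁻. In particular, for a very noisy channel the optimal fidelity 1 − p/2 is attained by transmitting a state of vanishingly small entanglement. -/
/-!
With `s = √(1 - p)`, the ratio of the amplitudes of `|χ₀⟩`, we have `2 - p = 1 + s ^ 2`, so the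
concurrence is `2 * s / (1 + s ^ 2)`. This increases strictly with `s` on `[-1, 1]`, while `s`
decreases strictly from `1` to `0` as `p` runs from `0` to `1`.
-/

open Set

theorem sqrt_div_mul_sqrt_div (a b : ℝ) {c : ℝ} (hc : 0 ≤ c) :
    √(a / c) * √(b / c) = √a * √b / c := by
  rw [Real.sqrt_div' a hc, Real.sqrt_div' b hc, div_mul_div_comm, Real.mul_self_sqrt hc]

theorem strictMonoOn_two_mul_div_one_add_sq
    {𝕜 : Type*} [Field 𝕜] [LinearOrder 𝕜] [IsStrictOrderedRing 𝕜] :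
    StrictMonoOn (fun x : 𝕜 => 2 * x / (1 + x ^ 2)) (Icc (-1) 1) := by
  rintro x ⟨hx, -⟩ y ⟨-, hy⟩ hxy
  have hmul : x * y < 1 := by
    have : 0 ≤ (1 + x) * (1 - y) := mul_nonneg (by linarith) (by linarith)
    linarith
  have hcross : 2 * y * (1 + x ^ 2) - 2 * x * (1 + y ^ 2) = 2 * ((y - x) * (1 - x * y)) := by
    ring
  have hpos : 0 < (y - x) * (1 - x * y) := mul_pos (sub_pos.2 hxy) (sub_pos.2 hmul)
  refine (div_lt_div_iff₀ (by positivity) (by positivity)).2 (sub_pos.1 ?_)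
  rw [hcross]
  exact mul_pos two_pos hpos

theorem strictAntiOn_sqrt_one_sub : StrictAntiOn (fun q : ℝ => √(1 - q)) (Iic 1) :=
  fun _ _ _ hb hab => Real.sqrt_lt_sqrt (sub_nonneg.2 hb) (sub_lt_sub_left hab 1)

theorem strictAntiOn_two_mul_sqrt_one_sub_div :
    StrictAntiOn (fun q : ℝ => 2 * √(1 - q) / (2 - q)) (Icc 0 1) := by
  have hmaps : MapsTo (fun q : ℝ => √(1 - q)) (Icc 0 1) (Icc (-1) 1) := fun q hq =>
    ⟨by linarith [Real.sqrt_nonneg (1 - q)], Real.sqrt_le_one.2 (by linarith [hq.1])⟩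
  refine (strictMonoOn_two_mul_div_one_add_sq.comp_strictAntiOn
    (strictAntiOn_sqrt_one_sub.mono Icc_subset_Iic_self) hmaps).congr fun q hq => ?_
  have hden : 1 + √(1 - q) ^ 2 = 2 - q := by
    rw [Real.sq_sqrt (sub_nonneg.2 hq.2)]
    ring
  simp only [Function.comp_apply, hden]

theorem continuousAt_two_mul_sqrt_one_sub_div {q : ℝ} (hq : q ≠ 2) :
    ContinuousAt (fun q : ℝ => 2 * √(1 - q) / (2 - q)) q :=
  ContinuousAt.div (by fun_prop) (by fun_prop) (sub_ne_zero.2 hq.symm)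

theorem tendsto_two_mul_sqrt_one_sub_div_nhds_one :
    Filter.Tendsto (fun q : ℝ => 2 * √(1 - q) / (2 - q)) (nhds 1) (nhds 0) := by
  simpa using (continuousAt_two_mul_sqrt_one_sub_div (q := 1) (by norm_num)).tendsto

/-- For `p ∈ (0,1)`, the concurrence of `|χ₀⟩` equals `2√(1−p)/(2−p)`;
moreover `p ↦ 2√(1−p)/(2−p)` is strictly decreasing on `(0,1)` and tends to `0` as
`p → 1⁻`. -/
theorem concurrence_chi0 (p : ℝ) (hp0 : 0 < p) (hp1 : p < 1) :
    2 * Real.sqrt (1 / (2 - p)) * Real.sqrt ((1 - p) / (2 - p)) =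
      2 * Real.sqrt (1 - p) / (2 - p) ∧
    StrictAntiOn (fun q : ℝ => 2 * Real.sqrt (1 - q) / (2 - q)) (Set.Ioo 0 1) ∧
    Filter.Tendsto (fun q : ℝ => 2 * Real.sqrt (1 - q) / (2 - q))
      (nhdsWithin 1 (Set.Iio 1)) (nhds 0) := by
  refine ⟨?_, strictAntiOn_two_mul_sqrt_one_sub_div.mono Ioo_subset_Icc_self,
    tendsto_two_mul_sqrt_one_sub_div_nhds_one.mono_left nhdsWithin_le_nhds⟩
  rw [mul_assoc, sqrt_div_mul_sqrt_div 1 (1 - p) (by linarith), Real.sqrt_one, one_mul,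
    mul_div_assoc]
end
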